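/- Let a > b > 0, c = √(a² − b²), and Ω = { x + iy : x²/a² + y²/b² ≤ 1 } ⊂ ℂ. Let g : ℂ \ [−c, c] → ℂ be holomorphic with g(z)² = z² − c² for all z and g(x) > 0 for all real x > c. Then for every z ∈ ℂ with z ∉ Ω, (1/π) ∫_Ω 1/(z − ζ) dA(ζ) = (2ab/c²) (z − g(z)). -/

import Mathlib

open Complex MeasureTheory

lemma ell_key (a b : ℝ) (hb : 0 < b) (hab : b < a) (u : ℂ) (hu : u ≠ 0) :
    ((((a+b)/2 : ℝ) : ℂ) * u + (((a-b)/2 : ℝ) : ℂ) / u).re ^ 2 / a ^ 2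
     + ((((a+b)/2 : ℝ) : ℂ) * u + (((a-b)/2 : ℝ) : ℂ) / u).im ^ 2 / b ^ 2 - 1
    = (normSq u - 1) * (((a+b)/2)^2 * normSq u - ((a-b)/2)^2) / normSq u ^ 2 *
      (u.re ^ 2 / a ^ 2 + u.im ^ 2 / b ^ 2) := by
  have hn : normSq u ≠ 0 := by simpa using hu
  have hn' : normSq u = u.re ^ 2 + u.im ^ 2 := by rw [normSq_apply]; ring
  have h1 : ((((a+b)/2 : ℝ) : ℂ) * u + (((a-b)/2 : ℝ) : ℂ) / u).re
      = ((a+b)/2 + (a-b)/2 / normSq u) * u.re := by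
    rw [add_re, re_ofReal_mul, div_re, ofReal_re, ofReal_im]; ring
  have h2 : ((((a+b)/2 : ℝ) : ℂ) * u + (((a-b)/2 : ℝ) : ℂ) / u).im
      = ((a+b)/2 - (a-b)/2 / normSq u) * u.im := by
    rw [add_im, im_ofReal_mul, div_im, ofReal_re, ofReal_im]; ring
  rw [h1, h2]
  have ha : a ≠ 0 := by linarith
  have hb' : b ≠ 0 := hb.ne'
  generalize normSq u = n at *
  have hy : u.im ^ 2 = n - u.re ^ 2 := by linarith
  simp only [mul_pow, hy]
  field_simp
  ring

lemma ell_notMem (a b : ℝ) (hb : 0 < b) (hab : b < a) (u : ℂ) (hu : 1 < normSq u) :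
    ((((a+b)/2 : ℝ) : ℂ) * u + (((a-b)/2 : ℝ) : ℂ) / u) ∉
      {p : ℂ | p.re ^ 2 / a ^ 2 + p.im ^ 2 / b ^ 2 ≤ 1} := by
  have hu0 : u ≠ 0 := by rintro rfl; simp at hu; linarith
  have h := ell_key a b hb hab u hu0
  have ha : 0 < a := by linarith
  have h1 : 0 < u.re ^ 2 / a ^ 2 + u.im ^ 2 / b ^ 2 := by
    by_cases hr : u.re = 0
    · have hi : u.im ≠ 0 := fun hi => hu0 (Complex.ext hr hi)
      positivity
    · positivity
  have h2 : 0 < (((a+b)/2)^2 * normSq u - ((a-b)/2)^2) := by nlinarith [mul_pos ha hb]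
  have : 0 < (normSq u - 1) * (((a+b)/2)^2 * normSq u - ((a-b)/2)^2) / normSq u ^ 2 *
      (u.re ^ 2 / a ^ 2 + u.im ^ 2 / b ^ 2) := by
    have : 0 < normSq u - 1 := by linarith
    positivity
  simp only [Set.mem_ofPred_eq, not_le]
  linarith

lemma ell_exists (a b : ℝ) (hb : 0 < b) (hab : b < a) (z : ℂ)
    (hz : z ∉ {p : ℂ | p.re ^ 2 / a ^ 2 + p.im ^ 2 / b ^ 2 ≤ 1}) :
    ∃ u : ℂ, 1 < normSq u ∧ z = (((a+b)/2 : ℝ) : ℂ) * u + (((a-b)/2 : ℝ) : ℂ) / u := by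
  set α : ℝ := (a+b)/2 with hα
  set β : ℝ := (a-b)/2 with hβ
  have hα0 : 0 < α := by rw [hα]; linarith
  have hβ0 : 0 < β := by rw [hβ]; linarith
  have hβα : β < α := by rw [hα, hβ]; linarith
  have hαc : (α : ℂ) ≠ 0 := by exact_mod_cast hα0.ne'
  have hβc : (β : ℂ) ≠ 0 := by exact_mod_cast hβ0.ne'
  obtain ⟨s, hs⟩ : ∃ s : ℂ, s ^ 2 = z ^ 2 - 4 * α * β :=
    ⟨_, Complex.cpow_ofNat_inv_pow _ 2⟩
  -- main step
  have main : ∀ u v : ℂ, α * u * v = β → α * (u + v) = z → normSq v ≤ normSq u →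
      ∃ u : ℂ, 1 < normSq u ∧ z = (α : ℂ) * u + (β : ℂ) / u := by
    intro u v huv hsum hle
    have hu0 : u ≠ 0 := by rintro rfl; simp at huv; exact hβc huv.symm
    have hzu : z = (α : ℂ) * u + (β : ℂ) / u := by
      rw [← hsum, ← huv]; field_simp
    refine ⟨u, ?_, hzu⟩
    by_contra! hn
    apply hz
    have h := ell_key a b hb hab u hu0
    rw [← hα, ← hβ, ← hzu] at h
    have h3 : α ^ 2 * normSq u * normSq v = β ^ 2 := by
      have := congrArg normSq huv
      simp only [map_mul, normSq_ofReal] at this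
      rw [sq, sq, ← this]
    have h5 : 0 ≤ α ^ 2 * normSq u - β ^ 2 := by
      have h0 := normSq_nonneg u
      have : normSq u * normSq v ≤ normSq u * 1 := mul_le_mul_of_nonneg_left (hle.trans hn) h0
      nlinarith [sq_nonneg α]
    have : (normSq u - 1) * (α^2 * normSq u - β^2) / normSq u ^ 2 *
      (u.re ^ 2 / a ^ 2 + u.im ^ 2 / b ^ 2) ≤ 0 := by
      apply mul_nonpos_of_nonpos_of_nonneg _ (by positivity)
      apply div_nonpos_of_nonpos_of_nonneg _ (by positivity)
      exact mul_nonpos_of_nonpos_of_nonneg (by linarith) h5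
    simp only [Set.mem_ofPred_eq]
    linarith
  have e1 : (α:ℂ) * ((z + s) / (2 * α)) * ((z - s) / (2 * α)) = β := by
    field_simp
    linear_combination -hs
  have e2 : (α:ℂ) * ((z + s) / (2 * α) + (z - s) / (2 * α)) = z := by
    field_simp; ring
  rcases le_total (normSq ((z - s) / (2 * α))) (normSq ((z + s) / (2 * α))) with h | h
  · exact main _ _ e1 e2 h
  · exact main _ _ (by rw [← e1]; ring) ((by ring : _ = _).trans e2) h

lemma ell_K (a b c : ℝ) (hb : 0 < b) (hab : b < a) (hc : c = Real.sqrt (a ^ 2 - b ^ 2)) :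
    Complex.ofReal '' Set.Icc (-c) c ⊆ {p : ℂ | p.re ^ 2 / a ^ 2 + p.im ^ 2 / b ^ 2 ≤ 1} := by
  rintro _ ⟨x, ⟨hx1, hx2⟩, rfl⟩
  have ha : 0 < a := by linarith
  have hc2 : c ^ 2 = a ^ 2 - b ^ 2 := by rw [hc, Real.sq_sqrt]; nlinarith
  simp only [Set.mem_ofPred_eq, ofReal_re, ofReal_im]
  have : x ^ 2 / a ^ 2 ≤ 1 := by rw [div_le_one (by positivity)]; nlinarith
  simpa using this

lemma ell_g (a b : ℝ) (hb : 0 < b) (hab : b < a)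
    (c : ℝ) (hc : c = Real.sqrt (a ^ 2 - b ^ 2))
    (K : Set ℂ) (hK : K = Complex.ofReal '' Set.Icc (-c) c)
    (g : ℂ → ℂ) (hg : DifferentiableOn ℂ g Kᶜ)
    (hg2 : ∀ z ∉ K, g z ^ 2 = z ^ 2 - (c : ℂ) ^ 2)
    (hgpos : ∀ x : ℝ, c < x → (g x).im = 0 ∧ 0 < (g x).re) (u : ℂ) (hu : 1 < normSq u) :
    g ((((a+b)/2 : ℝ) : ℂ) * u + (((a-b)/2 : ℝ) : ℂ) / u) =
      (((a+b)/2 : ℝ) : ℂ) * u - (((a-b)/2 : ℝ) : ℂ) / u := by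
  have hKs := ell_K a b c hb hab hc
  rw [← hK] at hKs
  have hKn : ∀ u : ℂ, 1 < normSq u →
      ((((a+b)/2 : ℝ) : ℂ) * u + (((a-b)/2 : ℝ) : ℂ) / u) ∉ K := fun u hu h =>
    ell_notMem a b hb hab u hu (hKs h)
  have hc2 : c ^ 2 = a ^ 2 - b ^ 2 := by rw [hc, Real.sq_sqrt]; nlinarith
  have hc0 : 0 ≤ c := by rw [hc]; positivity
  set α : ℝ := (a+b)/2 with hα
  set β : ℝ := (a-b)/2 with hβ
  have hα0 : 0 < α := by rw [hα]; linarith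
  have hβ0 : 0 < β := by rw [hβ]; linarith
  have hβα : β < α := by rw [hα, hβ]; linarith
  have hcc : (c : ℂ) ^ 2 = 4 * α * β := by
    have : c ^ 2 = 4 * α * β := by rw [hc2, hα, hβ]; ring
    exact_mod_cast this
  let S : Set ℂ := {v | 0 < v.re}
  have hS : IsPreconnected S := (convex_halfSpace_re_gt 0).isPreconnected
  have hSn : ∀ v ∈ S, 1 < normSq (exp v) := by
    intro v hv
    have : 1 < Real.exp v.re := Real.one_lt_exp_iff.2 hv
    rw [normSq_eq_norm_sq, norm_exp]; nlinarith
  have hsq : ∀ v ∈ S, g (α * exp v + β / exp v) ^ 2 = (α * exp v - β / exp v) ^ 2 := by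
    intro v hv
    rw [hg2 _ (hKn _ (hSn v hv)), hcc]
    have := exp_ne_zero v
    field_simp
    ring
  have hne : ∀ v ∈ S, (α * exp v - β / exp v) ≠ 0 := by
    intro v hv h0
    have h1 := hSn v hv
    have h2 : (α : ℂ) * exp v * exp v = β := by
      have := exp_ne_zero v
      field_simp at h0
      linear_combination h0
    have := congrArg normSq h2
    simp only [map_mul, normSq_ofReal] at this
    have h3 : 1 < normSq (exp v) * normSq (exp v) := by nlinarith
    nlinarith [mul_pos hα0 hα0]
  have h1S : (1 : ℂ) ∈ S := by simp [S]
  have h1 : g (α * exp 1 + β / exp 1) = α * exp 1 - β / exp 1 := by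
    rcases sq_eq_sq_iff_eq_or_eq_neg.1 (hsq 1 h1S) with h | h
    · exact h
    · exfalso
      set x : ℝ := α * Real.exp 1 + β / Real.exp 1 with hx
      have hxc : (x : ℂ) = α * exp 1 + β / exp 1 := by rw [hx]; push_cast; rfl
      have hx0 : 0 < x := by positivity
      have hcx : c < x := by
        by_contra! hle
        apply hKn _ (hSn 1 h1S)
        rw [hK, ← hxc]
        exact ⟨x, ⟨by linarith, hle⟩, rfl⟩
      have h3 := (hgpos x hcx).2
      rw [hxc, h] at h3
      have h4 : -((α:ℂ) * exp 1 - β / exp 1) = ((-(α * Real.exp 1 - β / Real.exp 1) : ℝ) : ℂ) := by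
        push_cast; rfl
      rw [h4, ofReal_re] at h3
      have h5 : 1 < Real.exp 1 := Real.one_lt_exp_iff.2 one_pos
      have h6 : β / Real.exp 1 < β := div_lt_self hβ0 h5
      nlinarith
  have hjc : Continuous (fun v : ℂ => (α * exp v + β / exp v)) := by
    have := exp_ne_zero
    fun_prop (disch := simp)
  have hEq := hS.eq_of_sq_eq (f := fun v => g (α * exp v + β / exp v))
    (g := fun v => α * exp v - β / exp v)
    (hg.continuousOn.comp hjc.continuousOn (fun v hv => hKn _ (hSn v hv)))
    (by fun_prop (disch := simp)) (fun v hv => hsq v hv) (fun {v} hv => hne v hv) h1S h1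
  have hu0 : u ≠ 0 := by rintro rfl; simp at hu; linarith
  have hl : log u ∈ S := by
    simp only [S, Set.mem_ofPred_eq, log_re]
    apply Real.log_pos
    rw [normSq_eq_norm_sq] at hu
    nlinarith [norm_nonneg u]
  have := hEq hl
  simpa [exp_log hu0] using this

lemma ell_circle (α β : ℝ) (hβ0 : 0 < β) (hβα : β < α) (u : ℂ) (hu : 1 < normSq u) :
    ∫ θ in (-Real.pi)..Real.pi, (α * u + β / u - (α * exp (θ * I) + β / exp (θ * I)))⁻¹
      = 2 * Real.pi / (α * u - β / u) := by
  have hu1 : 1 < ‖u‖ := by rw [normSq_eq_norm_sq] at hu; nlinarith [norm_nonneg u]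
  have hu0 : u ≠ 0 := by rintro rfl; simp at hu1; linarith
  have hα0 : 0 < α := by linarith
  have hαc : (α : ℂ) ≠ 0 := by exact_mod_cast hα0.ne'
  have hper : Function.Periodic
    (fun θ : ℝ => (α * u + β / u - (α * exp (θ * I) + β / exp (θ * I)))⁻¹) (2 * Real.pi) := by
    intro θ
    have : exp (((θ + 2 * Real.pi : ℝ) : ℂ) * I) = exp (θ * I) := by
      push_cast; rw [add_mul, exp_add, exp_two_pi_mul_I, mul_one]
    simp only [this]
  have h1 := hper.intervalIntegral_add_eq (-Real.pi) 0
  rw [show -Real.pi + 2 * Real.pi = Real.pi by ring, zero_add] at h1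
  rw [h1]
  have hw : β / (α * u) ∈ Metric.ball (0 : ℂ) 1 := by
    simp only [Metric.mem_ball, dist_zero_right, norm_div, norm_mul, norm_real, Real.norm_eq_abs,
      abs_of_pos hβ0, abs_of_pos hα0]
    rw [div_lt_one (by positivity)]
    nlinarith
  have hd : DifferentiableOn ℂ (fun w : ℂ => (α * (u - w))⁻¹) (Metric.closedBall 0 1) := by
    intro w hw
    have : u - w ≠ 0 := by
      intro h; rw [sub_eq_zero] at h; subst h
      simp at hw; linarith
    apply DifferentiableAt.differentiableWithinAt
    have := mul_ne_zero hαc this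
    fun_prop (disch := assumption)
  have h2 := hd.circleIntegral_sub_inv_smul hw
  rw [circleIntegral] at h2
  have h3 : ∀ θ : ℝ, deriv (circleMap 0 1) θ • (circleMap 0 1 θ - β / (α * u))⁻¹ •
      ((α * (u - circleMap 0 1 θ))⁻¹ : ℂ) =
      I * (α * u + β / u - (α * exp (θ * I) + β / exp (θ * I)))⁻¹ := by
    intro θ
    have he := exp_ne_zero (θ * I)
    simp only [deriv_circleMap, circleMap, zero_add, ofReal_one, one_mul, smul_eq_mul]
    have : α * u + β / u - (α * exp (θ * I) + β / exp (θ * I)) =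
      (exp (θ * I) - β / (α * u)) * (α * (u - exp (θ * I))) / exp (θ * I) := by
      field_simp; ring
    rw [this]
    generalize exp (θ * I) - β / (α * u) = X
    generalize α * (u - exp (θ * I)) = Y
    rw [inv_div, div_eq_mul_inv, mul_inv]; ring
  simp only [h3] at h2
  rw [intervalIntegral.integral_const_mul] at h2
  have h4 : (α * (u - β / (α * u)) : ℂ) = α * u - β / u := by field_simp
  rw [h4, smul_eq_mul] at h2
  apply mul_left_cancel₀ I_ne_zero
  rw [h2, div_eq_mul_inv]; ring

lemma ell_polar (a b : ℝ) (hb : 0 < b) (hab : b < a) (f : ℂ → ℂ) :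
    ∫ ζ in {p : ℂ | p.re ^ 2 / a ^ 2 + p.im ^ 2 / b ^ 2 ≤ 1}, f ζ =
      ((a * b : ℝ) : ℂ) * ∫ p in Set.Ioc (0:ℝ) 1 ×ˢ Set.Ioo (-Real.pi) Real.pi,
        (p.1 : ℂ) * f (⟨a * (p.1 * Real.cos p.2), b * (p.1 * Real.sin p.2)⟩) := by
  have ha : 0 < a := by linarith
  set Ω : Set ℂ := {p : ℂ | p.re ^ 2 / a ^ 2 + p.im ^ 2 / b ^ 2 ≤ 1} with hΩ
  have hΩm : MeasurableSet Ω := by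
    apply IsClosed.measurableSet
    apply isClosed_le _ continuous_const
    fun_prop
  let G : ℝ × ℝ → ℂ := fun p => Ω.indicator f ⟨p.1, p.2⟩
  let L : ℝ × ℝ →ₗ[ℝ] ℝ × ℝ := LinearMap.prodMap (a • LinearMap.id) (b • LinearMap.id)
  have hL : ∀ p, L p = (a * p.1, b * p.2) := fun p => by simp [L]
  have hdet : LinearMap.det L = a * b := by simp [L, LinearMap.det_prodMap]
  have hdet0 : LinearMap.det L ≠ 0 := by rw [hdet]; positivity
  have hmap := Measure.map_linearMap_addHaar_eq_smul_addHaar (volume : Measure (ℝ × ℝ)) hdet0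
  have hemb : MeasurableEmbedding L :=
    (LinearEquiv.ofIsUnitDet (f := L) (v := Module.finBasis ℝ (ℝ × ℝ))
      (v' := Module.finBasis ℝ (ℝ × ℝ))
      (by rw [LinearMap.det_toMatrix]; exact isUnit_iff_ne_zero.2 hdet0)).toContinuousLinearEquiv.toHomeomorph.measurableEmbedding
  have h1 : ∫ p, G (L p) = (a * b)⁻¹ • ∫ p, G p := by
    rw [← hemb.integral_map, hmap, integral_smul_measure, hdet, ENNReal.toReal_ofReal (abs_nonneg _),
      abs_of_pos (by positivity)]
  have h2 : ∫ ζ in Ω, f ζ = ∫ p, G p := by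
    rw [← integral_indicator hΩm, ← (Complex.volume_preserving_equiv_real_prod.symm).integral_comp
    measurableEquivRealProd.symm.measurableEmbedding]
    rfl
  have h3 : ∫ p, G (L p) = ∫ p in Set.Ioc (0:ℝ) 1 ×ˢ Set.Ioo (-Real.pi) Real.pi,
        (p.1 : ℂ) * f (⟨a * (p.1 * Real.cos p.2), b * (p.1 * Real.sin p.2)⟩) := by
    rw [← integral_comp_polarCoord_symm, ← integral_indicator polarCoord.open_target.measurableSet,
      ← integral_indicator (measurableSet_Ioc.prod measurableSet_Ioo)]
    congr 1
    ext ⟨r, θ⟩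
    have hmem : 0 < r → ((⟨a * (r * Real.cos θ), b * (r * Real.sin θ)⟩ : ℂ) ∈ Ω ↔ r ≤ 1) := by
      intro hr
      simp only [hΩ, Set.mem_ofPred_eq]
      have : (a * (r * Real.cos θ)) ^ 2 / a ^ 2 + (b * (r * Real.sin θ)) ^ 2 / b ^ 2 = r ^ 2 := by
        field_simp
        linear_combination Real.sin_sq_add_cos_sq θ
      rw [this, sq_le_one_iff₀ hr.le]
    simp only [Set.indicator_apply, polarCoord_target, Set.mem_prod, Set.mem_Ioi, Set.mem_Ioc,
      polarCoord_symm_apply, hL, G]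
    by_cases hr : 0 < r
    · have hm := hmem hr
      by_cases hr1 : r ≤ 1
      · rw [if_pos (hm.2 hr1)]; simp [hr, hr1]
      · rw [if_neg (fun h => hr1 (hm.1 h))]; simp [hr1]
    · simp [hr]
  rw [h2, ← h3, h1, real_smul, ← mul_assoc, ← ofReal_mul, mul_inv_cancel₀ (by positivity)]
  simp

/-- points z/r remain outside -/
lemma ell_scale (a b : ℝ) (z : ℂ) (hz : z ∉ {p : ℂ | p.re ^ 2 / a ^ 2 + p.im ^ 2 / b ^ 2 ≤ 1})
    (r : ℝ) (hr : 0 < r) (hr1 : r ≤ 1) :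
    z / r ∉ {p : ℂ | p.re ^ 2 / a ^ 2 + p.im ^ 2 / b ^ 2 ≤ 1} := by
  simp only [Set.mem_ofPred_eq, not_le, div_ofReal_re, div_ofReal_im] at *
  have : (z.re / r) ^ 2 / a ^ 2 + (z.im / r) ^ 2 / b ^ 2 =
    (z.re ^ 2 / a ^ 2 + z.im ^ 2 / b ^ 2) / r ^ 2 := by
    rw [div_pow, div_pow]; ring
  rw [this, lt_div_iff₀ (by positivity)]
  nlinarith

theorem cauchy_transform_ellipse_outside
    (a b : ℝ) (hb : 0 < b) (hab : b < a)
    (c : ℝ) (hc : c = Real.sqrt (a ^ 2 - b ^ 2))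
    (Ω : Set ℂ) (hΩ : Ω = {p : ℂ | p.re ^ 2 / a ^ 2 + p.im ^ 2 / b ^ 2 ≤ 1})
    (K : Set ℂ) (hK : K = Complex.ofReal '' Set.Icc (-c) c)
    (g : ℂ → ℂ) (hg : DifferentiableOn ℂ g Kᶜ)
    (hg2 : ∀ z ∉ K, g z ^ 2 = z ^ 2 - (c : ℂ) ^ 2)
    (hgpos : ∀ x : ℝ, c < x → (g x).im = 0 ∧ 0 < (g x).re)
    (z : ℂ) (hz : z ∉ Ω) :
    (Real.pi : ℂ)⁻¹ * (∫ ζ in Ω, (z - ζ)⁻¹)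
      = ((2 * a * b / c ^ 2 : ℝ) : ℂ) * (z - g z) := by
  have ha : 0 < a := by linarith
  have hc2 : c ^ 2 = a ^ 2 - b ^ 2 := by rw [hc, Real.sq_sqrt]; nlinarith
  have hc20 : 0 < c ^ 2 := by rw [hc2]; nlinarith
  have hcc : (c : ℂ) ^ 2 ≠ 0 := by exact_mod_cast hc20.ne'
  have hgu := ell_g a b hb hab c hc K hK g hg hg2 hgpos
  have hKs := ell_K a b c hb hab hc
  rw [← hK] at hKs
  subst hΩ
  have hα0 : 0 < (a+b)/2 := by linarith
  have hβ0 : 0 < (a-b)/2 := by linarith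
  have hβα : (a-b)/2 < (a+b)/2 := by linarith
  -- parametrization along the ray
  have hex : ∀ r : ℝ, 0 < r → r ≤ 1 → ∃ u : ℂ, 1 < normSq u ∧
      z / r = (((a+b)/2 : ℝ) : ℂ) * u + (((a-b)/2 : ℝ) : ℂ) / u ∧
      g (z / r) = (((a+b)/2 : ℝ) : ℂ) * u - (((a-b)/2 : ℝ) : ℂ) / u := by
    intro r hr hr1
    obtain ⟨u, hu, huz⟩ := ell_exists a b hb hab _ (ell_scale a b z hz r hr hr1)
    exact ⟨u, hu, huz, by rw [huz]; exact hgu u hu⟩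
  have hKr : ∀ r : ℝ, 0 < r → r ≤ 1 → z / r ∈ Kᶜ := fun r hr hr1 h =>
    ell_scale a b z hz r hr hr1 (hKs h)
  have hnorm : ∀ u : ℂ, 1 < normSq u → 1 < ‖u‖ := fun u hu => by
    rw [normSq_eq_norm_sq] at hu; nlinarith [norm_nonneg u]
  have hgb : ∀ r : ℝ, 0 < r → r ≤ 1 → b ≤ ‖g (z / r)‖ := by
    intro r hr hr1
    obtain ⟨u, hu, -, h⟩ := hex r hr hr1
    have hu1 := hnorm u hu
    rw [h]
    refine le_trans ?_ (norm_sub_norm_le _ _)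
    rw [norm_mul, norm_div, norm_real, norm_real, Real.norm_of_nonneg hα0.le,
      Real.norm_of_nonneg hβ0.le]
    have := div_lt_self hβ0 hu1
    nlinarith
  have hg0 : ∀ r : ℝ, 0 < r → r ≤ 1 → g (z / r) ≠ 0 := by
    intro r hr hr1 h
    have := hgb r hr hr1
    rw [h, norm_zero] at this; linarith
  have hKo : IsOpen Kᶜ := by
    rw [hK]
    exact (isCompact_Icc.image continuous_ofReal).isClosed.isOpen_compl
  have hdir : ∀ r : ℝ, 0 < r → HasDerivAt (fun r : ℝ => z / (r : ℂ)) (-z / r ^ 2) r := by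
    intro r hr
    have hr' : (r : ℂ) ≠ 0 := by exact_mod_cast hr.ne'
    have h := ((hasDerivAt_id (r : ℂ)).fun_inv hr').const_mul z
    have h := h.comp_ofReal
    simp only [id, ← div_eq_mul_inv] at h
    convert h using 1
    ring
  have hgd : ∀ r : ℝ, 0 < r → r ≤ 1 → HasDerivAt g (z / r / g (z / r)) (z / r) := by
    intro r hr hr1
    have h0 := hg0 r hr hr1
    have hd := (hg.differentiableAt (hKo.mem_nhds (hKr r hr hr1))).hasDerivAt
    have h1 := hd.fun_pow 2
    have h2 : HasDerivAt (fun w : ℂ => w ^ 2 - (c : ℂ) ^ 2) (2 * (z / r)) (z / r) := by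
      simpa using ((hasDerivAt_id (z / (r:ℂ))).fun_pow 2).sub_const ((c : ℂ) ^ 2)
    have h3 : (fun w : ℂ => w ^ 2 - (c : ℂ) ^ 2) =ᶠ[nhds (z / r)] fun w => g w ^ 2 := by
      filter_upwards [hKo.mem_nhds (hKr r hr hr1)] with w hw
      exact (hg2 w hw).symm
    have h4 := (h2.congr_of_eventuallyEq h3.symm).unique h1
    have e : z / r / g (z / r) = deriv g (z / r) := by
      rw [div_eq_iff h0]
      simp at h4
      linear_combination h4 / 2
    rw [e]
    exact hd
  have hFd : ∀ r : ℝ, 0 < r → r ≤ 1 →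
      HasDerivAt (fun r : ℝ => (r : ℂ) * g (z / r)) (-(c:ℂ)^2 / g (z / r)) r := by
    intro r hr hr1
    have hr' : (r : ℂ) ≠ 0 := by exact_mod_cast hr.ne'
    have h0 := hg0 r hr hr1
    have h1 := (hasDerivAt_id (r : ℂ)).comp_ofReal.fun_mul
      ((hgd r hr hr1).comp r (hdir r hr))
    have h2 := hg2 _ (hKr r hr hr1)
    have e : -(c:ℂ)^2 / g (z / r) = 1 * g (z / r) + (r : ℂ) * (z / r / g (z / r) * (-z / r ^ 2)) := by
      have e2 : (r : ℂ) * (z / r / g (z / r) * (-z / r ^ 2)) = - (z / r) ^ 2 / g (z / r) := by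
        field_simp
      rw [e2, div_eq_iff h0, add_mul, div_mul_cancel₀ _ h0]
      linear_combination -h2
    rw [e]
    exact h1
  -- the radial integral
  have hcontg : ContinuousOn (fun r : ℝ => (g (z / r))⁻¹) (Set.Ioc 0 1) := by
    intro r hr
    have h := ((hgd r hr.1 hr.2).comp r (hdir r hr.1)).continuousAt
    exact (h.inv₀ (hg0 r hr.1 hr.2)).continuousWithinAt
  have hintg : IntervalIntegrable (fun r : ℝ => (g (z / r))⁻¹) volume 0 1 := by
    rw [intervalIntegrable_iff_integrableOn_Ioc_of_le zero_le_one]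
    refine Integrable.of_bound (hcontg.aestronglyMeasurable measurableSet_Ioc) b⁻¹ ?_
    refine (ae_restrict_mem measurableSet_Ioc).mono fun r hr => ?_
    rw [norm_inv]
    exact inv_anti₀ hb (hgb r hr.1 hr.2)
  have hrad : ∫ r in (0:ℝ)..1, (g (z / r))⁻¹ = (z - g z) / (c:ℂ) ^ 2 := by
    have hi : IntervalIntegrable (fun r : ℝ => -(c:ℂ)^2 / g (z / r)) volume 0 1 := by
      simpa only [div_eq_mul_inv] using hintg.const_mul (-(c:ℂ)^2)
    have h1 := intervalIntegral.integral_eq_sub_of_hasDerivAt_of_tendsto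
      (f := fun r : ℝ => (r : ℂ) * g (z / r)) (fa := z) (fb := g z) zero_lt_one
      (fun r hr => hFd r hr.1 hr.2.le) hi ?_ ?_
    · simp only [div_eq_mul_inv] at h1
      rw [intervalIntegral.integral_const_mul] at h1
      rw [eq_div_iff hcc]
      simp only [div_eq_mul_inv]
      linear_combination -h1
    · rw [tendsto_iff_norm_sub_tendsto_zero]
      have hlim : Filter.Tendsto (fun r : ℝ => r * (a - b)) (nhdsWithin 0 (Set.Ioi 0)) (nhds 0) := by
        have : Filter.Tendsto (fun r : ℝ => r * (a - b)) (nhds 0) (nhds (0 * (a-b))) :=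
          Continuous.tendsto (by fun_prop) 0
        rw [zero_mul] at this
        exact this.mono_left nhdsWithin_le_nhds
      refine squeeze_zero' (Filter.Eventually.of_forall fun r => norm_nonneg _) ?_ hlim
      filter_upwards [Ioc_mem_nhdsGT (zero_lt_one (α := ℝ))] with r hr
      obtain ⟨u, hu, h1, h2⟩ := hex r hr.1 hr.2
      have hr' : (r : ℂ) ≠ 0 := by exact_mod_cast hr.1.ne'
      have : (r : ℂ) * g (z / r) - z = -(r * ((a - b : ℝ) : ℂ) / u) := by
        have hz' : z = r * (z / r) := by field_simp
        rw [h2]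
        nth_rw 1 [hz']
        rw [h1]; push_cast; ring
      rw [this, norm_neg, norm_div, norm_mul, norm_real, norm_real, Real.norm_of_nonneg hr.1.le,
        Real.norm_of_nonneg (by linarith)]
      exact div_le_self (mul_nonneg hr.1.le (by linarith)) (hnorm u hu).le
    · have := (hFd 1 one_pos le_rfl).continuousAt.tendsto
      simp only [ofReal_one, div_one, one_mul] at this
      exact this.mono_left nhdsWithin_le_nhds
  -- integrability in polar coordinates
  have hcont : ContinuousOn (fun p : ℝ × ℝ => (p.1 : ℂ) *
      (z - (⟨a * (p.1 * Real.cos p.2), b * (p.1 * Real.sin p.2)⟩ : ℂ))⁻¹)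
      (Set.Icc (0:ℝ) 1 ×ˢ Set.Icc (-Real.pi) Real.pi) := by
    have hmk : Continuous (fun p : ℝ × ℝ =>
      (⟨a * (p.1 * Real.cos p.2), b * (p.1 * Real.sin p.2)⟩ : ℂ)) := by
      have : Continuous (fun p : ℝ × ℝ =>
        ((a * (p.1 * Real.cos p.2) : ℝ) : ℂ) + ((b * (p.1 * Real.sin p.2) : ℝ) : ℂ) * I) := by
        fun_prop
      refine this.congr fun p => ?_
      rw [mk_eq_add_mul_I]
    refine ContinuousOn.mul (by fun_prop) (ContinuousOn.inv₀ (continuous_const.sub hmk).continuousOn ?_)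
    rintro ⟨r, θ⟩ ⟨hr, -⟩ h0
    apply hz
    rw [sub_eq_zero.1 h0]
    simp only [Set.mem_ofPred_eq]
    have : (a * (r * Real.cos θ)) ^ 2 / a ^ 2 + (b * (r * Real.sin θ)) ^ 2 / b ^ 2 = r ^ 2 := by
      field_simp
      linear_combination r ^ 2 * Real.sin_sq_add_cos_sq θ
    rw [this]
    have h1 := hr.1
    have h2 := hr.2
    dsimp at h1 h2
    nlinarith
  have hint : IntegrableOn (fun p : ℝ × ℝ => (p.1 : ℂ) *
      (z - (⟨a * (p.1 * Real.cos p.2), b * (p.1 * Real.sin p.2)⟩ : ℂ))⁻¹)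
      (Set.Ioc (0:ℝ) 1 ×ˢ Set.Ioo (-Real.pi) Real.pi) :=
    (hcont.integrableOn_compact (isCompact_Icc.prod isCompact_Icc)).mono_set
      (Set.prod_mono Set.Ioc_subset_Icc_self Set.Ioo_subset_Icc_self)
  have hinner : ∀ r ∈ Set.Ioc (0:ℝ) 1, ∫ θ in Set.Ioo (-Real.pi) Real.pi, (r : ℂ) *
      (z - (⟨a * (r * Real.cos θ), b * (r * Real.sin θ)⟩ : ℂ))⁻¹ =
      2 * Real.pi * (g (z / r))⁻¹ := by
    intro r hr
    obtain ⟨u, hu, h1, h2⟩ := hex r hr.1 hr.2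
    have hr' : (r : ℂ) ≠ 0 := by exact_mod_cast hr.1.ne'
    rw [h2, ← div_eq_mul_inv, ← ell_circle _ _ hβ0 hβα u hu, ← h1, ← integral_Ioc_eq_integral_Ioo,
      intervalIntegral.integral_of_le (by linarith [Real.pi_pos])]
    congr 1
    ext θ
    have e : (⟨a * (r * Real.cos θ), b * (r * Real.sin θ)⟩ : ℂ) =
      r * ((((a+b)/2 : ℝ) : ℂ) * exp (θ * I) + (((a-b)/2 : ℝ) : ℂ) / exp (θ * I)) := by
      rw [mk_eq_add_mul_I, div_eq_mul_inv _ (exp _), ← exp_neg, ← neg_mul, exp_mul_I, exp_mul_I,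
        Complex.cos_neg, Complex.sin_neg]
      push_cast
      ring
    rw [e]
    have hz' : z = r * (z / r) := by field_simp
    nth_rw 1 [hz']
    rw [← mul_sub, mul_inv, mul_inv_cancel_left₀ hr']
  rw [ell_polar a b hb hab (fun ζ => (z - ζ)⁻¹), Measure.volume_eq_prod, setIntegral_prod _ hint,
    setIntegral_congr_fun measurableSet_Ioc hinner, ← intervalIntegral.integral_of_le zero_le_one,
    intervalIntegral.integral_const_mul, hrad]
  have hpi : (Real.pi : ℂ) ≠ 0 := by exact_mod_cast Real.pi_ne_zero
  push_cast
  field_simp
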